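/- Let n ≥ 1, 0 < 2s < n, and let w ∈ L^∞(ℝⁿ) ∩ L¹(ℝⁿ) with Riesz potential v(x) = c_{n,s} ∫_{ℝⁿ} w(y)|x-y|^{2s-n} dy. Suppose v ∈ L^∞(ℝⁿ). Write s = m + γ with m ∈ ℕ and γ ∈ [0,1). If 0 < 2γ ≤ 1, then for every α ∈ (0, 2γ), v ∈ C^{2m,α}(ℝⁿ) with ‖v‖_{C^{2m,α}(ℝⁿ)} ≤ C(n,s,α)(‖v‖_{L^∞(ℝⁿ)} + ‖w‖_{L^∞(ℝⁿ)}). -/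

import Mathlib

open MeasureTheory

/-!
Split the kernel `‖z‖ ^ (2 s - n)` into dyadic annular pieces of size `2 ^ j`, all rescalings of one
smooth compactly supported profile. The `i`-th derivative of the `j`-th piece has `L¹` norm
comparable to `2 ^ (j (2 s - i))`, which bounds its convolution with `w` in terms of `‖w‖_∞`.

* For `j < 0`, interpolating between the derivatives of order `k` and `k + 1` bounds the `j`-th
  piece in `C^{k,α}` by a multiple of `2 ^ (j (2 s - k - α))`, which is summable as soon as
  `k + α < 2 s`.
* For `j ≥ 0` the low-order bounds are not summable in terms of `‖w‖_∞` alone: integrability of `w`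
  makes the sum smooth with bounded derivatives, but only those of order `N > 2 s` are controlled by
  `‖w‖_∞`. The far part itself is bounded, being the difference of `v` and the near part, so the
  Landau–Kolmogorov inequalities control its derivatives of all intermediate orders.
-/

namespace RieszPotential

open Filter ContinuousLinearMap
open Module (finrank)
open scoped ContDiff Topology Convolution

section Holder

variable {E F : Type*} [NormedAddCommGroup E] [NormedSpace ℝ E] [NormedAddCommGroup F]
  [NormedSpace ℝ F] {f g : E → F} {k : ℕ} {α a b r B B' : ℝ}

/-- The function `f` belongs to `C^{k,α}` with norm at most `B`. The bound is encoded as a common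
bound `B` for the sup norms of the derivatives of order at most `k` and for the `α`-Hölder seminorm
of the derivative of order `k`, rather than for their sum. -/
structure HolderNormLE (k : ℕ) (α B : ℝ) (f : E → F) : Prop where
  contDiff : ContDiff ℝ k f
  norm_iteratedFDeriv_le : ∀ i ≤ k, ∀ x, ‖iteratedFDeriv ℝ i f x‖ ≤ B
  norm_iteratedFDeriv_sub_le : ∀ x y,
    ‖iteratedFDeriv ℝ k f x - iteratedFDeriv ℝ k f y‖ ≤ B * ‖x - y‖ ^ α

theorem HolderNormLE.mono (hf : HolderNormLE k α B f) (h : B ≤ B') : HolderNormLE k α B' f where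
  contDiff := hf.contDiff
  norm_iteratedFDeriv_le i hi x := (hf.norm_iteratedFDeriv_le i hi x).trans h
  norm_iteratedFDeriv_sub_le x y := (hf.norm_iteratedFDeriv_sub_le x y).trans (by gcongr)

theorem HolderNormLE.norm_le (hf : HolderNormLE k α B f) (x : E) : ‖f x‖ ≤ B := by
  simpa only [norm_iteratedFDeriv_zero] using hf.norm_iteratedFDeriv_le 0 k.zero_le x

theorem HolderNormLE.add (hf : HolderNormLE k α B f) (hg : HolderNormLE k α B' g) :
    HolderNormLE k α (B + B') (f + g) := by
  have hD (i : ℕ) (hi : i ≤ k) (x : E) : iteratedFDeriv ℝ i (f + g) x =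
      iteratedFDeriv ℝ i f x + iteratedFDeriv ℝ i g x :=
    iteratedFDeriv_add_apply (hf.contDiff.of_le (mod_cast hi)).contDiffAt
      (hg.contDiff.of_le (mod_cast hi)).contDiffAt
  refine ⟨hf.contDiff.add hg.contDiff, fun i hi x ↦ ?_, fun x y ↦ ?_⟩
  · rw [hD i hi]
    exact norm_add_le_of_le (hf.norm_iteratedFDeriv_le i hi x) (hg.norm_iteratedFDeriv_le i hi x)
  · rw [hD k le_rfl, hD k le_rfl, add_sub_add_comm, add_mul]
    exact norm_add_le_of_le (hf.norm_iteratedFDeriv_sub_le x y) (hg.norm_iteratedFDeriv_sub_le x y)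

theorem HolderNormLE.tsum [CompleteSpace F] {ι : Type*} {f : ι → E → F} {B : ι → ℝ}
    (hf : ∀ i, HolderNormLE k α (B i) (f i)) (hB : Summable B) :
    HolderNormLE k α (∑' i, B i) (fun x ↦ ∑' i, f i x) := by
  have hD (i : ℕ) (hi : i ≤ k) (x : E) : iteratedFDeriv ℝ i (fun x ↦ ∑' j, f j x) x =
      ∑' j, iteratedFDeriv ℝ i (f j) x :=
    iteratedFDeriv_tsum_apply (N := (k : ℕ∞)) (fun j ↦ (hf j).contDiff) (fun _ _ ↦ hB)
      (fun i j x hi ↦ (hf j).norm_iteratedFDeriv_le i (mod_cast hi) x) (mod_cast hi) x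
  have hsum (x : E) : Summable fun j ↦ iteratedFDeriv ℝ k (f j) x :=
    .of_norm_bounded hB fun j ↦ (hf j).norm_iteratedFDeriv_le k le_rfl x
  refine ⟨?_, fun i hi x ↦ ?_, fun x y ↦ ?_⟩
  · exact contDiff_tsum (N := (k : ℕ∞)) (fun j ↦ (hf j).contDiff) (fun _ _ ↦ hB)
      fun i j x hi ↦ (hf j).norm_iteratedFDeriv_le i (mod_cast hi) x
  · rw [hD i hi]
    exact tsum_of_norm_bounded hB.hasSum fun j ↦ (hf j).norm_iteratedFDeriv_le i hi x
  · rw [hD k le_rfl, hD k le_rfl, ← (hsum x).tsum_sub (hsum y), ← tsum_mul_right]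
    exact tsum_of_norm_bounded (hB.mul_right _).hasSum
      fun j ↦ (hf j).norm_iteratedFDeriv_sub_le x y

theorem norm_iteratedFDeriv_sub_le_of_norm_succ_le (hf : ContDiff ℝ (k + 1) f)
    (hb : ∀ x, ‖iteratedFDeriv ℝ (k + 1) f x‖ ≤ b) (x y : E) :
    ‖iteratedFDeriv ℝ k f x - iteratedFDeriv ℝ k f y‖ ≤ b * ‖x - y‖ := by
  refine convex_univ.norm_image_sub_le_of_norm_fderiv_le (𝕜 := ℝ) (fun z _ ↦ ?_) (fun z _ ↦ ?_)
    (Set.mem_univ y) (Set.mem_univ x)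
  · exact hf.differentiable_iteratedFDeriv (mod_cast k.lt_succ_self) z
  · exact norm_fderiv_iteratedFDeriv.trans_le (hb z)

theorem min_one_le_rpow {t : ℝ} (ht : 0 ≤ t) (hα0 : 0 ≤ α) (hα1 : α ≤ 1) : min 1 t ≤ t ^ α := by
  rcases le_total t 1 with h | h
  · exact (min_le_right _ _).trans (Real.self_le_rpow_of_le_one ht h hα1)
  · exact (min_le_left _ _).trans (Real.one_le_rpow h hα0)

/-- A function oscillating at scale `r ≤ 1`: each derivative costs a factor `r⁻¹`. -/
theorem HolderNormLE.of_scale (hf : ContDiff ℝ (k + 1) f) (hr : 0 < r) (hr1 : r ≤ 1) (hα0 : 0 ≤ α)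
    (hα1 : α ≤ 1) (ha : ∀ i ≤ k + 1, ∀ x, ‖iteratedFDeriv ℝ i f x‖ ≤ a * r ^ ((k : ℝ) - i)) :
    HolderNormLE k α (2 * a * r ^ (-α)) f := by
  have hk (x : E) : ‖iteratedFDeriv ℝ k f x‖ ≤ a := by simpa using ha k k.le_succ x
  have ha0 : 0 ≤ a := (norm_nonneg _).trans (hk 0)
  refine ⟨hf.of_le (mod_cast k.le_succ), fun i hi x ↦ ?_, fun x y ↦ ?_⟩
  · have hpow : r ^ ((k : ℝ) - i) ≤ 1 :=
      Real.rpow_le_one hr.le hr1 (sub_nonneg.2 (mod_cast hi))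
    have hpow' : 1 ≤ r ^ (-α) := Real.one_le_rpow_of_pos_of_le_one_of_nonpos hr hr1 (by linarith)
    calc ‖iteratedFDeriv ℝ i f x‖ ≤ a * r ^ ((k : ℝ) - i) := ha i (hi.trans k.le_succ) x
      _ ≤ a * 1 := by gcongr
      _ ≤ 2 * a * 1 := by linarith
      _ ≤ 2 * a * r ^ (-α) := by gcongr
  · have hosc : ‖iteratedFDeriv ℝ k f x - iteratedFDeriv ℝ k f y‖ ≤ 2 * a * 1 := by
      linarith [norm_sub_le_of_le (hk x) (hk y)]
    have hlip : ‖iteratedFDeriv ℝ k f x - iteratedFDeriv ℝ k f y‖ ≤ 2 * a * (‖x - y‖ / r) := by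
      have hder (z : E) : ‖iteratedFDeriv ℝ (k + 1) f z‖ ≤ a * r⁻¹ := by
        simpa [Real.rpow_neg_one] using ha (k + 1) le_rfl z
      have hpos : 0 ≤ a * (‖x - y‖ / r) := by positivity
      calc _ ≤ a * r⁻¹ * ‖x - y‖ :=
            norm_iteratedFDeriv_sub_le_of_norm_succ_le hf hder x y
        _ = a * (‖x - y‖ / r) := by ring
        _ ≤ 2 * a * (‖x - y‖ / r) := by linarith
    calc _ ≤ 2 * a * min 1 (‖x - y‖ / r) := by
          rw [mul_min_of_nonneg _ _ (by positivity)]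
          exact le_min hosc hlip
      _ ≤ 2 * a * (‖x - y‖ / r) ^ α := by
          gcongr
          exact min_one_le_rpow (by positivity) hα0 hα1
      _ = 2 * a * r ^ (-α) * ‖x - y‖ ^ α := by
          rw [Real.div_rpow (norm_nonneg _) hr.le, Real.rpow_neg hr.le]
          ring

end Holder

section Interpolation

/-- The recursive inequality satisfied by the sup norms of the successive derivatives of a function,
out of which the Landau–Kolmogorov inequalities are obtained. -/
structure IsLandauSeq (a : ℕ → ℝ) : Prop where
  nonneg : ∀ i, 0 ≤ a i
  succ_le : ∀ i, ∀ h > 0, a (i + 1) ≤ 2 / h * a i + h * a (i + 2)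

theorem exists_forall_isLandauSeq_le_add_mul_succ (k : ℕ) {ε : ℝ} (hε : 0 < ε) :
    ∃ C, 0 ≤ C ∧ ∀ a, IsLandauSeq a → a k ≤ C * a 0 + ε * a (k + 1) := by
  induction k generalizing ε with
  | zero =>
    refine ⟨1, zero_le_one, fun a ha ↦ ?_⟩
    have := mul_nonneg hε.le (ha.nonneg 1)
    linarith
  | succ k ih =>
    obtain ⟨C, hC, hk⟩ := ih (ε := ε / 8) (by positivity)
    refine ⟨8 / ε * C, by positivity, fun a ha ↦ ?_⟩
    have habsorb : 4 / ε * a k ≤ 4 / ε * C * a 0 + a (k + 1) / 2 := by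
      calc 4 / ε * a k ≤ 4 / ε * (C * a 0 + ε / 8 * a (k + 1)) := by gcongr; exact hk a ha
        _ = _ := by field_simp; ring
    have hstep : a (k + 1) ≤ 4 / ε * a k + ε / 2 * a (k + 2) := by
      convert ha.succ_le k (ε / 2) (half_pos hε) using 2
      field_simp
      ring
    have hdouble : 8 / ε * C * a 0 = 2 * (4 / ε * C * a 0) := by ring
    linarith

theorem exists_forall_isLandauSeq_le (N : ℕ) :
    ∃ C, 0 ≤ C ∧ ∀ a, IsLandauSeq a → ∀ k ≤ N, a k ≤ C * a 0 + a N := by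
  induction N with
  | zero =>
    refine ⟨0, le_rfl, fun a _ k hk ↦ ?_⟩
    rw [Nat.le_zero.1 hk, zero_mul, zero_add]
  | succ N ih =>
    obtain ⟨C, hC, hle⟩ := ih
    obtain ⟨D, hD, hN⟩ := exists_forall_isLandauSeq_le_add_mul_succ N one_pos
    refine ⟨C + D, by positivity, fun a ha k hk ↦ ?_⟩
    rcases hk.eq_or_lt with rfl | hlt
    · exact le_add_of_nonneg_left (mul_nonneg (add_nonneg hC hD) (ha.nonneg 0))
    · linarith [hle a ha k (Nat.lt_succ_iff.1 hlt), hN a ha]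

variable {E F : Type*} [NormedAddCommGroup E] [NormedSpace ℝ E] [NormedAddCommGroup F]
  [NormedSpace ℝ F]

theorem norm_fderiv_le_of_norm_le_of_norm_fderiv_sub_le {f : E → F} {a b h : ℝ}
    (hf : Differentiable ℝ f) (ha : ∀ x, ‖f x‖ ≤ a) (hb0 : 0 ≤ b)
    (hb : ∀ x y, ‖fderiv ℝ f x - fderiv ℝ f y‖ ≤ b * ‖x - y‖) (hh : 0 < h) (x : E) :
    ‖fderiv ℝ f x‖ ≤ 2 / h * a + h * b := by
  have ha0 : 0 ≤ a := (norm_nonneg _).trans (ha 0)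
  refine opNorm_le_of_unit_norm (by positivity) fun e he ↦ ?_
  have hnorm : ‖h • e‖ = h := by rw [norm_smul, he, mul_one, Real.norm_of_nonneg hh.le]
  have htaylor : ‖f (x + h • e) - f x - h • fderiv ℝ f x e‖ ≤ b * h * h := by
    have := (convex_closedBall x h).norm_image_sub_le_of_norm_fderiv_le' (y := x + h • e)
      (fun z _ ↦ hf z) (φ := fderiv ℝ f x) (C := b * h) (fun z hz ↦ ?_)
      (Metric.mem_closedBall_self hh.le) (by simp [hnorm])
    · simpa only [add_sub_cancel_left, hnorm, map_smul] using this
    · refine (hb z x).trans ?_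
      gcongr
      exact mem_closedBall_iff_norm.1 hz
  have hsmul : h * ‖fderiv ℝ f x e‖ ≤ 2 * a + b * h * h := by
    calc h * ‖fderiv ℝ f x e‖ = ‖h • fderiv ℝ f x e‖ := by
          rw [norm_smul, Real.norm_of_nonneg hh.le]
      _ = ‖f (x + h • e) - f x - (f (x + h • e) - f x - h • fderiv ℝ f x e)‖ := by
          rw [sub_sub_cancel]
      _ ≤ a + a + b * h * h := norm_sub_le_of_le (norm_sub_le_of_le (ha _) (ha _)) htaylor
      _ = 2 * a + b * h * h := by ring
  calc ‖fderiv ℝ f x e‖ ≤ (2 * a + b * h * h) / h := by rwa [le_div_iff₀' hh]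
    _ = 2 / h * a + h * b := by field_simp

theorem isLandauSeq_iSup_norm_iteratedFDeriv {f : E → F} (hf : ContDiff ℝ ∞ f)
    (hbdd : ∀ i, BddAbove (Set.range fun x ↦ ‖iteratedFDeriv ℝ i f x‖)) :
    IsLandauSeq fun i ↦ ⨆ x, ‖iteratedFDeriv ℝ i f x‖ where
  nonneg i := Real.iSup_nonneg fun x ↦ norm_nonneg _
  succ_le i h hh := by
    refine ciSup_le fun x ↦ ?_
    rw [← norm_fderiv_iteratedFDeriv]
    refine norm_fderiv_le_of_norm_le_of_norm_fderiv_sub_le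
      (hf.differentiable_iteratedFDeriv (mod_cast WithTop.coe_lt_top i)) (le_ciSup (hbdd i))
      (Real.iSup_nonneg fun x ↦ norm_nonneg _) (fun y z ↦ ?_) hh x
    simp only [fderiv_iteratedFDeriv, Function.comp_apply]
    rw [← dist_eq_norm, LinearIsometryEquiv.dist_map, dist_eq_norm]
    exact norm_iteratedFDeriv_sub_le_of_norm_succ_le (hf.of_le (mod_cast le_top))
      (le_ciSup (hbdd (i + 2))) y z

variable (E F) in
theorem exists_forall_norm_iteratedFDeriv_le_mul_add (N : ℕ) :
    ∃ C, 0 ≤ C ∧ ∀ (f : E → F) (A B : ℝ), ContDiff ℝ ∞ f →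
      (∀ i, BddAbove (Set.range fun x ↦ ‖iteratedFDeriv ℝ i f x‖)) →
      (∀ x, ‖f x‖ ≤ A) → (∀ x, ‖iteratedFDeriv ℝ N f x‖ ≤ B) →
      ∀ k ≤ N, ∀ x, ‖iteratedFDeriv ℝ k f x‖ ≤ C * A + B := by
  obtain ⟨C, hC, hle⟩ := exists_forall_isLandauSeq_le N
  refine ⟨C, hC, fun f A B hf hbdd hA hB k hk x ↦ ?_⟩
  calc ‖iteratedFDeriv ℝ k f x‖ ≤ ⨆ x, ‖iteratedFDeriv ℝ k f x‖ := le_ciSup (hbdd k) x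
    _ ≤ C * (⨆ x, ‖iteratedFDeriv ℝ 0 f x‖) + ⨆ x, ‖iteratedFDeriv ℝ N f x‖ :=
        hle _ (isLandauSeq_iSup_norm_iteratedFDeriv hf hbdd) k hk
    _ ≤ C * A + B := by
        gcongr
        · exact ciSup_le fun x ↦ by simpa only [norm_iteratedFDeriv_zero] using hA x
        · exact ciSup_le hB

variable (E F) in
theorem exists_forall_holderNormLE_add_of_bounded {k N : ℕ} (hkN : k < N) {α : ℝ} (hα0 : 0 ≤ α)
    (hα1 : α ≤ 1) :
    ∃ C, 0 ≤ C ∧ ∀ (f g : E → F) (B : ℝ), HolderNormLE k α B f → ContDiff ℝ ∞ g →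
      (∀ i, BddAbove (Set.range fun x ↦ ‖iteratedFDeriv ℝ i g x‖)) →
      (∀ x, ‖iteratedFDeriv ℝ N g x‖ ≤ B) → (∀ x, ‖f x + g x‖ ≤ B) →
      HolderNormLE k α (C * B) (f + g) := by
  obtain ⟨C, hC, hinterp⟩ := exists_forall_norm_iteratedFDeriv_le_mul_add E F N
  refine ⟨1 + 2 * (C * 2 + 1), by positivity, fun f g B hf hg hbdd hN hfg ↦ ?_⟩
  have hg0 (x : E) : ‖g x‖ ≤ B + B := by
    simpa only [add_sub_cancel_left] using norm_sub_le_of_le (hfg x) (hf.norm_le x)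
  have hgk : HolderNormLE k α (2 * (C * (B + B) + B) * 1 ^ (-α)) g :=
    .of_scale (hg.of_le (mod_cast le_top)) one_pos le_rfl hα0 hα1 fun i hi x ↦ by
      simpa only [Real.one_rpow, mul_one] using
        hinterp g _ B hg hbdd hg0 hN i (hi.trans hkN) x
  convert hf.add hgk using 1
  rw [Real.one_rpow]
  ring

end Interpolation


section Convolution

variable {E F ι : Type*} [NormedAddCommGroup E] [MeasurableSpace E] [NormedAddCommGroup F]
  {μ : Measure E} {w : E → ℝ} {g : E → F} {M B : ℝ}

theorem integral_norm_mul_norm_sub_le_of_norm_le (hw : Integrable w μ) (hB : ∀ z, ‖g z‖ ≤ B)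
    (x : E) : ∫ y, ‖w y‖ * ‖g (x - y)‖ ∂μ ≤ (∫ y, ‖w y‖ ∂μ) * B := by
  rw [← integral_mul_const]
  refine integral_mono_of_nonneg (.of_forall fun y ↦ by positivity) (hw.norm.mul_const B)
    (.of_forall fun y ↦ ?_)
  exact mul_le_mul_of_nonneg_left (hB _) (norm_nonneg _)

theorem integral_norm_mul_norm_sub_le_of_ae_norm_le [BorelSpace E]
    [μ.IsAddLeftInvariant] [μ.IsNegInvariant]
    (hM : ∀ᵐ y ∂μ, ‖w y‖ ≤ M) (hg : Integrable g μ) (x : E) :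
    ∫ y, ‖w y‖ * ‖g (x - y)‖ ∂μ ≤ M * ∫ y, ‖g y‖ ∂μ := by
  rw [← integral_sub_left_eq_self (fun y ↦ ‖g y‖) μ x, ← integral_const_mul]
  refine integral_mono_of_nonneg (.of_forall fun y ↦ by positivity)
    ((hg.norm.comp_sub_left x).const_mul M) ?_
  filter_upwards [hM] with y hy
  gcongr

variable [NormedSpace ℝ F]

theorem norm_convolution_le (x : E) :
    ‖(w ⋆[lsmul ℝ ℝ, μ] g) x‖ ≤ ∫ y, ‖w y‖ * ‖g (x - y)‖ ∂μ := by
  simpa only [convolution, lsmul_apply, norm_smul] using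
    norm_integral_le_integral_norm fun y ↦ w y • g (x - y)

theorem hasSum_convolution [CompleteSpace F] [Countable ι] {K : ι → E → F} {L : E → F} {x : E}
    (hint : ∀ i, ConvolutionExistsAt w (K i) x (lsmul ℝ ℝ) μ)
    (hsum : Summable fun i ↦ ∫ y, ‖w y‖ * ‖K i (x - y)‖ ∂μ)
    (hK : ∀ z, HasSum (fun i ↦ K i z) (L z)) :
    HasSum (fun i ↦ (w ⋆[lsmul ℝ ℝ, μ] K i) x) ((w ⋆[lsmul ℝ ℝ, μ] L) x) := by
  have hL : (w ⋆[lsmul ℝ ℝ, μ] L) x = ∫ y, ∑' i, w y • K i (x - y) ∂μ :=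
    integral_congr_ae (.of_forall fun y ↦ ((hK (x - y)).const_smul (w y)).tsum_eq.symm)
  rw [hL]
  exact hasSum_integral_of_summable_integral_norm hint
    (by simpa only [lsmul_apply, norm_smul] using hsum)

variable [NormedSpace ℝ E] [BorelSpace E] [SFinite μ] [μ.IsAddLeftInvariant]

theorem fderiv_convolution_right (hw : LocallyIntegrable w μ) (hg : ContDiff ℝ 1 g)
    (hc : HasCompactSupport g) (x : E) :
    fderiv ℝ (w ⋆[lsmul ℝ ℝ, μ] g) x = ∫ y, w y • fderiv ℝ g (x - y) ∂μ :=
  (hc.hasFDerivAt_convolution_right (lsmul ℝ ℝ) hw hg x).fderiv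

theorem iteratedFDeriv_convolution_right (hw : LocallyIntegrable w μ) {N : ℕ}
    (hg : ContDiff ℝ N g) (hc : HasCompactSupport g) :
    iteratedFDeriv ℝ N (w ⋆[lsmul ℝ ℝ, μ] g) = w ⋆[lsmul ℝ ℝ, μ] iteratedFDeriv ℝ N g := by
  induction N with
  | zero =>
    ext1 x
    simp only [iteratedFDeriv_zero_eq_comp, Function.comp_apply, convolution, lsmul_apply,
      ← map_smul]
    exact ((continuousMultilinearCurryFin0 ℝ E F).symm.toContinuousLinearEquiv.integral_comp_comm
      _).symm
  | succ N ih =>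
    ext1 x
    rw [iteratedFDeriv_succ_eq_comp_left, ih (hg.of_le (mod_cast N.le_succ)), Function.comp_apply,
      fderiv_convolution_right hw (hg.iteratedFDeriv_right (by norm_cast; rw [add_comm]))
        (hc.iteratedFDeriv (𝕜 := ℝ) N)]
    simp only [iteratedFDeriv_succ_eq_comp_left, Function.comp_apply, convolution, lsmul_apply,
      ← map_smul]
    exact (ContinuousLinearEquiv.integral_comp_comm (𝕜 := ℝ) (μ := μ)
      (E := E →L[ℝ] E [×N]→L[ℝ] F) (F := E [×N + 1]→L[ℝ] F) (continuousMultilinearCurryLeftEquiv ℝ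
        (fun _ : Fin (N + 1) ↦ E) F).symm.toContinuousLinearEquiv _).symm

end Convolution

section Dilation

variable {E F : Type*} [NormedAddCommGroup E] [NormedSpace ℝ E] [NormedAddCommGroup F]
  [NormedSpace ℝ F] {ψ : E → F} {p r A B M : ℝ} {k : ℕ}

/-- The rescaled profile `z ↦ r ^ p ψ(z / r)`. The exponent `p` is the degree of the homogeneous
kernel that is decomposed into such pieces. -/
noncomputable def dilate (p r : ℝ) (ψ : E → F) (z : E) : F := r ^ p • ψ (r⁻¹ • z)

theorem contDiff_dilate {n : WithTop ℕ∞} (hψ : ContDiff ℝ n ψ) : ContDiff ℝ n (dilate p r ψ) :=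
  (hψ.comp (contDiff_const_smul r⁻¹)).const_smul (r ^ p)

theorem hasCompactSupport_dilate (hc : HasCompactSupport ψ) (hr : r ≠ 0) :
    HasCompactSupport (dilate p r ψ) :=
  (hc.comp_smul (inv_ne_zero hr)).smul_left (f := fun _ ↦ r ^ p)

theorem norm_iteratedFDeriv_dilate (hψ : ContDiff ℝ k ψ) (hr : 0 < r) (z : E) :
    ‖iteratedFDeriv ℝ k (dilate p r ψ) z‖ = r ^ (p - k) * ‖iteratedFDeriv ℝ k ψ (r⁻¹ • z)‖ := by
  have hcomp : ContDiff ℝ k fun z ↦ ψ (r⁻¹ • z) := hψ.comp (contDiff_const_smul r⁻¹)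
  change ‖iteratedFDeriv ℝ k (r ^ p • fun z ↦ ψ (r⁻¹ • z)) z‖ = _
  rw [iteratedFDeriv_const_smul_apply hcomp.contDiffAt, iteratedFDeriv_comp_const_smul _ hψ,
    norm_smul, norm_smul, ← mul_assoc, norm_pow, Real.norm_of_nonneg (by positivity),
    Real.norm_of_nonneg (by positivity), Real.rpow_sub_natCast hr.ne', inv_pow, div_eq_mul_inv]

variable [MeasurableSpace E]

theorem exists_forall_integral_norm_iteratedFDeriv_le (μ : Measure E) (ψ : E → F) (N : ℕ) :
    ∃ A, ∀ i ≤ N, ∫ z, ‖iteratedFDeriv ℝ i ψ z‖ ∂μ ≤ A :=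
  ⟨∑ i ∈ Finset.range (N + 1), ∫ z, ‖iteratedFDeriv ℝ i ψ z‖ ∂μ, fun _ hi ↦
    Finset.single_le_sum (f := fun i ↦ ∫ z, ‖iteratedFDeriv ℝ i ψ z‖ ∂μ)
      (fun _ _ ↦ integral_nonneg fun _ ↦ norm_nonneg _) (Finset.mem_range_succ_iff.2 hi)⟩

variable [BorelSpace E] {μ : Measure E} {w : E → ℝ}

theorem contDiff_convolution_dilate [SFinite μ] [μ.IsAddLeftInvariant] {n : ℕ∞}
    (hw : LocallyIntegrable w μ) (hψ : ContDiff ℝ n ψ) (hc : HasCompactSupport ψ) (hr : r ≠ 0) :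
    ContDiff ℝ n (w ⋆[lsmul ℝ ℝ, μ] dilate p r ψ) :=
  (hasCompactSupport_dilate hc hr).contDiff_convolution_right (lsmul ℝ ℝ) hw (contDiff_dilate hψ)

variable [FiniteDimensional ℝ E] [μ.IsAddHaarMeasure]

theorem integral_norm_iteratedFDeriv_dilate (hψ : ContDiff ℝ k ψ) (hr : 0 < r) :
    ∫ z, ‖iteratedFDeriv ℝ k (dilate p r ψ) z‖ ∂μ =
      r ^ (p + finrank ℝ E - k) * ∫ z, ‖iteratedFDeriv ℝ k ψ z‖ ∂μ := by
  simp only [norm_iteratedFDeriv_dilate hψ hr]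
  rw [integral_const_mul,
    Measure.integral_comp_inv_smul_of_nonneg μ (fun z ↦ ‖iteratedFDeriv ℝ k ψ z‖) hr.le,
    smul_eq_mul, ← mul_assoc, ← Real.rpow_add_natCast hr.ne']
  ring_nf

theorem norm_iteratedFDeriv_convolution_dilate_le_of_ae_norm_le (hw : LocallyIntegrable w μ)
    (hM : ∀ᵐ y ∂μ, ‖w y‖ ≤ M) (hψ : ContDiff ℝ k ψ) (hc : HasCompactSupport ψ) (hr : 0 < r)
    (hA : ∫ z, ‖iteratedFDeriv ℝ k ψ z‖ ∂μ ≤ A) (x : E) :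
    ‖iteratedFDeriv ℝ k (w ⋆[lsmul ℝ ℝ, μ] dilate p r ψ) x‖ ≤
      M * A * r ^ (p + finrank ℝ E - k) := by
  have hM0 : 0 ≤ M := (norm_nonneg _).trans hM.exists.choose_spec
  have hcr : HasCompactSupport (dilate p r ψ) := hasCompactSupport_dilate hc hr.ne'
  have hint : Integrable (iteratedFDeriv ℝ k (dilate p r ψ)) μ :=
    ((contDiff_dilate hψ).continuous_iteratedFDeriv le_rfl).integrable_of_hasCompactSupport
      (hcr.iteratedFDeriv k)
  rw [iteratedFDeriv_convolution_right hw (contDiff_dilate hψ) hcr]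
  calc _ ≤ M * ∫ z, ‖iteratedFDeriv ℝ k (dilate p r ψ) z‖ ∂μ :=
        (norm_convolution_le x).trans (integral_norm_mul_norm_sub_le_of_ae_norm_le hM hint x)
    _ = M * (∫ z, ‖iteratedFDeriv ℝ k ψ z‖ ∂μ) * r ^ (p + finrank ℝ E - k) := by
        rw [integral_norm_iteratedFDeriv_dilate hψ hr]
        ring
    _ ≤ M * A * r ^ (p + finrank ℝ E - k) := by gcongr

theorem norm_iteratedFDeriv_convolution_dilate_le_of_norm_le (hw : Integrable w μ)
    (hψ : ContDiff ℝ k ψ) (hc : HasCompactSupport ψ) (hr : 1 ≤ r)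
    (hB : ∀ z, ‖iteratedFDeriv ℝ k ψ z‖ ≤ B) (x : E) :
    ‖iteratedFDeriv ℝ k (w ⋆[lsmul ℝ ℝ, μ] dilate p r ψ) x‖ ≤ (∫ y, ‖w y‖ ∂μ) * (B * r ^ p) := by
  have hr0 : 0 < r := one_pos.trans_le hr
  have hB0 : 0 ≤ B := (norm_nonneg _).trans (hB 0)
  rw [iteratedFDeriv_convolution_right hw.locallyIntegrable (contDiff_dilate hψ)
    (hasCompactSupport_dilate hc hr0.ne')]
  refine (norm_convolution_le x).trans (integral_norm_mul_norm_sub_le_of_norm_le hw (fun z ↦ ?_) x)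
  calc ‖iteratedFDeriv ℝ k (dilate p r ψ) z‖
      = ‖iteratedFDeriv ℝ k ψ (r⁻¹ • z)‖ * r ^ (p - k) := by
        rw [norm_iteratedFDeriv_dilate hψ hr0, mul_comm]
    _ ≤ B * r ^ p := by
        gcongr
        · exact hB _
        · exact sub_le_self p k.cast_nonneg

variable {ι : Type*} {s : ι → ℝ} {α : ℝ}

theorem holderNormLE_convolution_dilate (hw : LocallyIntegrable w μ) (hM : ∀ᵐ y ∂μ, ‖w y‖ ≤ M)
    (hψ : ContDiff ℝ (k + 1) ψ) (hc : HasCompactSupport ψ)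
    (hA : ∀ i ≤ k + 1, ∫ z, ‖iteratedFDeriv ℝ i ψ z‖ ∂μ ≤ A) (hα0 : 0 ≤ α) (hα1 : α ≤ 1)
    (hr0 : 0 < r) (hr1 : r ≤ 1) :
    HolderNormLE k α (2 * M * A * r ^ (p + finrank ℝ E - k - α))
      (w ⋆[lsmul ℝ ℝ, μ] dilate p r ψ) := by
  have hscale : HolderNormLE k α (2 * (M * A * r ^ (p + finrank ℝ E - k)) * r ^ (-α))
      (w ⋆[lsmul ℝ ℝ, μ] dilate p r ψ) := by
    refine .of_scale ?_ hr0 hr1 hα0 hα1 fun i hi x ↦ ?_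
    · exact contDiff_convolution_dilate (n := (k + 1 : ℕ)) hw hψ hc hr0.ne'
    · rw [mul_assoc, ← Real.rpow_add hr0, sub_add_sub_cancel]
      exact norm_iteratedFDeriv_convolution_dilate_le_of_ae_norm_le hw hM
        (hψ.of_le (mod_cast hi)) hc hr0 (hA i hi) x
  convert hscale using 1
  rw [sub_eq_add_neg _ α, Real.rpow_add hr0]
  ring

theorem holderNormLE_tsum_convolution_dilate [CompleteSpace F] (hw : LocallyIntegrable w μ)
    (hM : ∀ᵐ y ∂μ, ‖w y‖ ≤ M) (hψ : ContDiff ℝ (k + 1) ψ) (hc : HasCompactSupport ψ)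
    (hA : ∀ i ≤ k + 1, ∫ z, ‖iteratedFDeriv ℝ i ψ z‖ ∂μ ≤ A) (hα0 : 0 ≤ α) (hα1 : α ≤ 1)
    (hs0 : ∀ j, 0 < s j) (hs1 : ∀ j, s j ≤ 1)
    (hs : Summable fun j ↦ s j ^ (p + finrank ℝ E - k - α)) :
    HolderNormLE k α (2 * M * A * ∑' j, s j ^ (p + finrank ℝ E - k - α))
      fun x ↦ ∑' j, (w ⋆[lsmul ℝ ℝ, μ] dilate p (s j) ψ) x := by
  rw [← tsum_mul_left]
  exact .tsum (fun j ↦ holderNormLE_convolution_dilate hw hM hψ hc hA hα0 hα1 (hs0 j) (hs1 j))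
    (hs.mul_left _)

theorem exists_summable_norm_iteratedFDeriv_convolution_dilate_le (hw : Integrable w μ)
    (hψ : ContDiff ℝ ∞ ψ) (hc : HasCompactSupport ψ) (hs1 : ∀ j, 1 ≤ s j)
    (hs : Summable fun j ↦ s j ^ p) :
    ∃ v : ℕ → ι → ℝ, (∀ i, Summable (v i)) ∧ ∀ i j x,
      ‖iteratedFDeriv ℝ i (w ⋆[lsmul ℝ ℝ, μ] dilate p (s j) ψ) x‖ ≤ v i j := by
  have hbdd (i : ℕ) : ∃ B, ∀ z, ‖iteratedFDeriv ℝ i ψ z‖ ≤ B :=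
    (hψ.continuous_iteratedFDeriv (mod_cast le_top)).bounded_above_of_compact_support
      (hc.iteratedFDeriv i)
  choose B hB using hbdd
  exact ⟨fun i j ↦ (∫ y, ‖w y‖ ∂μ) * (B i * s j ^ p), fun i ↦ (hs.mul_left _).mul_left _,
    fun i j ↦ norm_iteratedFDeriv_convolution_dilate_le_of_norm_le hw
      (hψ.of_le (mod_cast le_top)) hc (hs1 j) (hB i)⟩

theorem summable_two_zpow_natCast_rpow {q : ℝ} (hq : q < 0) :
    Summable fun n : ℕ ↦ ((2 : ℝ) ^ (n : ℤ)) ^ q := by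
  have hlt : (2 : ℝ) ^ q < 1 := Real.rpow_lt_one_of_one_lt_of_neg one_lt_two hq
  refine (summable_geometric_of_lt_one (by positivity) hlt).congr fun n ↦ ?_
  rw [zpow_natCast, Real.rpow_pow_comm two_pos.le]

theorem summable_two_zpow_neg_rpow {q : ℝ} (hq : 0 < q) :
    Summable fun n : ℕ ↦ ((2 : ℝ) ^ (-((n : ℤ) + 1))) ^ q := by
  refine ((summable_nat_add_iff 1).2 (summable_two_zpow_natCast_rpow (neg_neg_of_pos hq))).congr
    fun n ↦ ?_
  rw [zpow_neg, Real.inv_rpow (by positivity), Real.rpow_neg (by positivity), Nat.cast_add_one]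

theorem summable_integral_norm_mul_norm_dilate (hw : Integrable w μ) (hM : ∀ᵐ y ∂μ, ‖w y‖ ≤ M)
    (hψ : Continuous ψ) (hc : HasCompactSupport ψ) (hp : p < 0)
    (hpE : 0 < p + finrank ℝ E) (x : E) :
    Summable fun j : ℤ ↦ ∫ y, ‖w y‖ * ‖dilate p ((2 : ℝ) ^ j) ψ (x - y)‖ ∂μ := by
  obtain ⟨B, hB⟩ := hψ.bounded_above_of_compact_support hc
  have hnonneg (j : ℤ) : 0 ≤ ∫ y, ‖w y‖ * ‖dilate p ((2 : ℝ) ^ j) ψ (x - y)‖ ∂μ :=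
    integral_nonneg fun y ↦ by positivity
  refine .of_nat_of_neg_add_one ?_ ?_
  · refine .of_nonneg_of_le (fun n ↦ hnonneg n) (fun n ↦ ?_)
      (((summable_two_zpow_natCast_rpow hp).mul_right B).mul_left (∫ y, ‖w y‖ ∂μ))
    refine integral_norm_mul_norm_sub_le_of_norm_le hw (fun z ↦ ?_) x
    rw [dilate, norm_smul, Real.norm_of_nonneg (by positivity)]
    gcongr
    exact hB _
  · refine .of_nonneg_of_le (fun n ↦ hnonneg _) (fun n ↦ ?_)
      (((summable_two_zpow_neg_rpow hpE).mul_right (∫ z, ‖ψ z‖ ∂μ)).mul_left M)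
    have hr : (0 : ℝ) < 2 ^ (-((n : ℤ) + 1)) := by positivity
    have hint : Integrable (dilate p ((2 : ℝ) ^ (-((n : ℤ) + 1))) ψ) μ :=
      (contDiff_dilate (contDiff_zero.2 hψ)).continuous.integrable_of_hasCompactSupport
        (hasCompactSupport_dilate hc hr.ne')
    have hscale := integral_norm_iteratedFDeriv_dilate (μ := μ) (p := p) (k := 0)
      (contDiff_zero.2 hψ) hr
    simp only [norm_iteratedFDeriv_zero, Nat.cast_zero, sub_zero] at hscale
    exact (integral_norm_mul_norm_sub_le_of_ae_norm_le hM hint x).trans_eq (by rw [hscale])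

variable [CompleteSpace F]

theorem contDiff_tsum_convolution_dilate (hw : Integrable w μ) (hψ : ContDiff ℝ ∞ ψ)
    (hc : HasCompactSupport ψ) (hs1 : ∀ j, 1 ≤ s j) (hs : Summable fun j ↦ s j ^ p) :
    ContDiff ℝ ∞ fun x ↦ ∑' j, (w ⋆[lsmul ℝ ℝ, μ] dilate p (s j) ψ) x := by
  obtain ⟨v, hv, hle⟩ := exists_summable_norm_iteratedFDeriv_convolution_dilate_le hw hψ hc hs1 hs
  exact contDiff_tsum (fun j ↦ contDiff_convolution_dilate hw.locallyIntegrable hψ hc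
    (one_pos.trans_le (hs1 j)).ne') (fun i _ ↦ hv i) fun i j x _ ↦ hle i j x

theorem iteratedFDeriv_tsum_convolution_dilate (hw : Integrable w μ) (hψ : ContDiff ℝ ∞ ψ)
    (hc : HasCompactSupport ψ) (hs1 : ∀ j, 1 ≤ s j) (hs : Summable fun j ↦ s j ^ p) (x : E) :
    iteratedFDeriv ℝ k (fun x ↦ ∑' j, (w ⋆[lsmul ℝ ℝ, μ] dilate p (s j) ψ) x) x =
      ∑' j, iteratedFDeriv ℝ k (w ⋆[lsmul ℝ ℝ, μ] dilate p (s j) ψ) x := by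
  obtain ⟨v, hv, hle⟩ := exists_summable_norm_iteratedFDeriv_convolution_dilate_le hw hψ hc hs1 hs
  exact iteratedFDeriv_tsum_apply (N := ⊤) (fun j ↦ contDiff_convolution_dilate
    hw.locallyIntegrable hψ hc (one_pos.trans_le (hs1 j)).ne') (fun i _ ↦ hv i)
    (fun i j x _ ↦ hle i j x) le_top x

theorem bddAbove_norm_iteratedFDeriv_tsum_convolution_dilate (hw : Integrable w μ)
    (hψ : ContDiff ℝ ∞ ψ) (hc : HasCompactSupport ψ) (hs1 : ∀ j, 1 ≤ s j)
    (hs : Summable fun j ↦ s j ^ p) : BddAbove (Set.range fun x ↦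
      ‖iteratedFDeriv ℝ k (fun x ↦ ∑' j, (w ⋆[lsmul ℝ ℝ, μ] dilate p (s j) ψ) x) x‖) := by
  obtain ⟨v, hv, hle⟩ := exists_summable_norm_iteratedFDeriv_convolution_dilate_le hw hψ hc hs1 hs
  refine ⟨∑' j, v k j, Set.forall_mem_range.2 fun x ↦ ?_⟩
  rw [iteratedFDeriv_tsum_convolution_dilate hw hψ hc hs1 hs]
  exact tsum_of_norm_bounded (hv k).hasSum fun j ↦ hle k j x

theorem norm_iteratedFDeriv_tsum_convolution_dilate_le (hw : Integrable w μ)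
    (hM : ∀ᵐ y ∂μ, ‖w y‖ ≤ M) (hψ : ContDiff ℝ ∞ ψ) (hc : HasCompactSupport ψ)
    (hA : ∫ z, ‖iteratedFDeriv ℝ k ψ z‖ ∂μ ≤ A) (hs1 : ∀ j, 1 ≤ s j)
    (hs : Summable fun j ↦ s j ^ p) (hsk : Summable fun j ↦ s j ^ (p + finrank ℝ E - k)) (x : E) :
    ‖iteratedFDeriv ℝ k (fun x ↦ ∑' j, (w ⋆[lsmul ℝ ℝ, μ] dilate p (s j) ψ) x) x‖ ≤
      M * A * ∑' j, s j ^ (p + finrank ℝ E - k) := by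
  rw [iteratedFDeriv_tsum_convolution_dilate hw hψ hc hs1 hs, ← tsum_mul_left]
  exact tsum_of_norm_bounded (hsk.mul_left _).hasSum fun j ↦
    norm_iteratedFDeriv_convolution_dilate_le_of_ae_norm_le hw.locallyIntegrable hM
      (hψ.of_le (mod_cast le_top)) hc (one_pos.trans_le (hs1 j)) hA x

end Dilation

section DyadicKernel

theorem hasSum_int_sub_of_eventually_eq {G : Type*} [AddCommGroup G] [TopologicalSpace G]
    {u : ℤ → G} {a b : G} (ha : ∀ᶠ j in atBot, u j = a) (hb : ∀ᶠ j in atTop, u j = b) :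
    HasSum (fun j ↦ u (j + 1) - u j) (b - a) := by
  obtain ⟨m, hm⟩ := eventually_atBot.1 ha
  obtain ⟨n, hn⟩ := eventually_atTop.1 hb
  have hsum : ∑ i ∈ Finset.range (n - m).toNat, (u (m + i + 1) - u (m + i)) = b - a := by
    have := Finset.sum_range_sub (fun i : ℕ ↦ u (m + i)) (n - m).toNat
    push_cast [← add_assoc] at this
    rw [this, hn _ (by lia)]
    simp [hm m le_rfl]
  let e : ℕ ↪ ℤ := Nat.castEmbedding.trans (addLeftEmbedding m)
  have hmap : ∑ j ∈ (Finset.range (n - m).toNat).map e, (u (j + 1) - u j) = b - a :=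
    (Finset.sum_map _ e _).trans hsum
  rw [← hmap]
  refine hasSum_sum_of_ne_finset_zero fun j hj ↦ ?_
  rcases lt_or_ge j m with h | h
  · rw [hm j h.le, hm (j + 1) h, sub_self]
  · have hj' : n ≤ j := by
      by_contra! h'
      refine hj (Finset.mem_map.2 ⟨(j - m).toNat, Finset.mem_range.2 (by lia), ?_⟩)
      simp [e, h]
    rw [hn j hj', hn (j + 1) (by lia), sub_self]

variable {E : Type*} [NormedAddCommGroup E]

section Telescope

variable [NormedSpace ℝ E] {φ : E → ℝ} {p r : ℝ}

/-- The annular piece `(φ(z / 2) - φ(z)) ‖z‖ ^ p` of the homogeneous kernel `‖z‖ ^ p`, where `φ` is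
a cutoff equal to `1` near the origin. -/
noncomputable def dyadicKernel (φ : E → ℝ) (p : ℝ) (z : E) : ℝ :=
  (φ ((2 : ℝ)⁻¹ • z) - φ z) * ‖z‖ ^ p

theorem dilate_dyadicKernel (hr : 0 < r) (z : E) :
    dilate p r (dyadicKernel φ p) z = (φ ((2 * r)⁻¹ • z) - φ (r⁻¹ • z)) * ‖z‖ ^ p := by
  have hpow : r ^ p * ‖r⁻¹ • z‖ ^ p = ‖z‖ ^ p := by
    rw [← Real.mul_rpow hr.le (norm_nonneg _), ← norm_smul_of_nonneg hr.le,
      smul_inv_smul₀ hr.ne']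
  rw [dilate, dyadicKernel, smul_smul, ← mul_inv, smul_eq_mul, mul_left_comm, hpow]

theorem hasCompactSupport_dyadicKernel (hc : HasCompactSupport φ) :
    HasCompactSupport (dyadicKernel φ p) :=
  ((hc.comp_smul (inv_ne_zero two_ne_zero)).sub hc).mul_right

theorem hasSum_dilate_dyadicKernel (hφ : φ =ᶠ[𝓝 0] 1) (hc : HasCompactSupport φ) (hp : p ≠ 0)
    (z : E) : HasSum (fun j : ℤ ↦ dilate p ((2 : ℝ) ^ j) (dyadicKernel φ p) z) (‖z‖ ^ p) := by
  have hterm (j : ℤ) : dilate p ((2 : ℝ) ^ j) (dyadicKernel φ p) z =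
      (φ (((2 : ℝ) ^ (j + 1))⁻¹ • z) - φ (((2 : ℝ) ^ j)⁻¹ • z)) * ‖z‖ ^ p := by
    rw [dilate_dyadicKernel (by positivity), zpow_add_one₀ two_ne_zero, mul_comm (2 : ℝ)]
  simp only [hterm]
  rcases eq_or_ne z 0 with rfl | hz
  · simp [Real.zero_rpow hp, hasSum_zero]
  have htop : Tendsto (fun j : ℤ ↦ (2 : ℝ) ^ j) atTop atTop := by
    simpa only [Function.comp_def, Real.rpow_intCast] using
      (tendsto_rpow_atTop_of_base_gt_one (2 : ℝ) one_lt_two).comp tendsto_intCast_atTop_atTop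
  have hbot : Tendsto (fun j : ℤ ↦ ((2 : ℝ) ^ j)⁻¹) atBot atTop := by
    simpa only [Function.comp_def, zpow_neg] using htop.comp tendsto_neg_atBot_atTop
  have hone : ∀ᶠ j : ℤ in atTop, φ (((2 : ℝ) ^ j)⁻¹ • z) = 1 := by
    have hlim := (tendsto_inv_atTop_zero.comp htop).smul_const z
    rw [zero_smul] at hlim
    exact hlim.eventually hφ
  have hzero : ∀ᶠ j : ℤ in atBot, φ (((2 : ℝ) ^ j)⁻¹ • z) = 0 := by
    have hlim : Tendsto (fun j : ℤ ↦ ((2 : ℝ) ^ j)⁻¹ • z) atBot (Bornology.cobounded E) := by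
      rw [← tendsto_norm_atTop_iff_cobounded]
      have := hbot.atTop_mul_const (norm_pos_iff.2 hz)
      refine this.congr fun j ↦ ?_
      rw [norm_smul_of_nonneg (by positivity)]
    filter_upwards [hlim.eventually hc.isCompact.isBounded] with j hj
    exact image_eq_zero_of_notMem_tsupport hj
  simpa using (hasSum_int_sub_of_eventually_eq hzero hone).mul_right (‖z‖ ^ p)

end Telescope

theorem contDiff_dyadicKernel [InnerProductSpace ℝ E] {φ : E → ℝ} {p : ℝ} {n : ℕ∞}
    (hφn : ContDiff ℝ n φ) (hφ : φ =ᶠ[𝓝 0] 1) : ContDiff ℝ n (dyadicKernel φ p) := by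
  rw [contDiff_iff_contDiffAt]
  intro z
  rcases eq_or_ne z 0 with rfl | hz
  · have hlim : Tendsto (fun z : E ↦ (2 : ℝ)⁻¹ • z) (𝓝 0) (𝓝 0) := by
      simpa only [smul_zero] using (continuous_const_smul (2 : ℝ)⁻¹).tendsto (0 : E)
    have hzero : dyadicKernel φ p =ᶠ[𝓝 0] 0 := by
      filter_upwards [hφ, hlim.eventually hφ] with y hy hy'
      simp [dyadicKernel, hy, hy']
    exact contDiffAt_const.congr_of_eventuallyEq hzero
  · exact ((hφn.comp (contDiff_const_smul _)).sub hφn).contDiffAt.mul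
      ((contDiffAt_norm ℝ hz).rpow_const_of_ne (norm_ne_zero_iff.2 hz))

end DyadicKernel

section Potential

variable {E : Type*} [NormedAddCommGroup E] [InnerProductSpace ℝ E] [MeasurableSpace E]
  {μ : Measure E} {φ w : E → ℝ} {p α M : ℝ} {k : ℕ}

/-- The contribution to the Riesz potential `w ⋆ ‖·‖ ^ p` of the dyadic scales below `1`. -/
noncomputable def nearPotential (μ : Measure E) (φ : E → ℝ) (p : ℝ) (w : E → ℝ) (x : E) : ℝ :=
  ∑' n : ℕ, (w ⋆[lsmul ℝ ℝ, μ] dilate p ((2 : ℝ) ^ (-((n : ℤ) + 1))) (dyadicKernel φ p)) x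

/-- The contribution to the Riesz potential `w ⋆ ‖·‖ ^ p` of the dyadic scales above `1`. -/
noncomputable def farPotential (μ : Measure E) (φ : E → ℝ) (p : ℝ) (w : E → ℝ) (x : E) : ℝ :=
  ∑' n : ℕ, (w ⋆[lsmul ℝ ℝ, μ] dilate p ((2 : ℝ) ^ (n : ℤ)) (dyadicKernel φ p)) x

variable [FiniteDimensional ℝ E] [BorelSpace E] [μ.IsAddHaarMeasure]

theorem convolution_norm_rpow_eq_near_add_far (hφn : ContDiff ℝ ∞ φ) (hφ : φ =ᶠ[𝓝 0] 1)
    (hc : HasCompactSupport φ) (hp : p < 0) (hpE : 0 < p + finrank ℝ E) (hw : Integrable w μ)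
    (hM : ∀ᵐ y ∂μ, ‖w y‖ ≤ M) :
    w ⋆[lsmul ℝ ℝ, μ] (fun z ↦ ‖z‖ ^ p) = nearPotential μ φ p w + farPotential μ φ p w := by
  ext1 x
  have hcψ : HasCompactSupport (dyadicKernel φ p) := hasCompactSupport_dyadicKernel hc
  have hψ : Continuous (dyadicKernel φ p) := (contDiff_dyadicKernel hφn hφ).continuous
  have hexists (j : ℤ) :
      ConvolutionExistsAt w (dilate p ((2 : ℝ) ^ j) (dyadicKernel φ p)) x (lsmul ℝ ℝ) μ :=
    (hasCompactSupport_dilate hcψ (by positivity)).convolutionExists_right _ hw.locallyIntegrable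
      (contDiff_dilate (contDiff_zero.2 hψ)).continuous x
  have hsum := hasSum_convolution hexists
    (summable_integral_norm_mul_norm_dilate hw hM hψ hcψ hp hpE x)
    (hasSum_dilate_dyadicKernel hφ hc hp.ne)
  have hnat := hsum.summable.comp_injective Nat.cast_injective
  have hneg := hsum.summable.comp_injective (i := fun n : ℕ ↦ -((n : ℤ) + 1))
    fun m n h ↦ by simpa using h
  rw [← hsum.tsum_eq, tsum_of_nat_of_neg_add_one (f := fun j : ℤ ↦
    (w ⋆[lsmul ℝ ℝ, μ] dilate p ((2 : ℝ) ^ j) (dyadicKernel φ p)) x) hnat hneg, add_comm,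
    Pi.add_apply, nearPotential, farPotential]

theorem exists_forall_holderNormLE_nearPotential (hφn : ContDiff ℝ ∞ φ) (hφ : φ =ᶠ[𝓝 0] 1)
    (hc : HasCompactSupport φ) (hα0 : 0 ≤ α) (hα1 : α ≤ 1) (hkα : k + α < p + finrank ℝ E) :
    ∃ C, 0 ≤ C ∧ ∀ (w : E → ℝ) (M : ℝ), LocallyIntegrable w μ → (∀ᵐ y ∂μ, ‖w y‖ ≤ M) →
      HolderNormLE k α (C * M) (nearPotential μ φ p w) := by
  obtain ⟨A, hA⟩ := exists_forall_integral_norm_iteratedFDeriv_le μ (dyadicKernel φ p) (k + 1)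
  have hA0 : 0 ≤ A := (integral_nonneg fun _ ↦ norm_nonneg _).trans (hA 0 (Nat.zero_le _))
  refine ⟨2 * A * ∑' n : ℕ, ((2 : ℝ) ^ (-((n : ℤ) + 1))) ^ (p + finrank ℝ E - k - α),
    by positivity, fun w M hw hM ↦ ?_⟩
  exact (holderNormLE_tsum_convolution_dilate (α := α) (p := p) hw hM
    ((contDiff_dyadicKernel hφn hφ).of_le (mod_cast le_top)) (hasCompactSupport_dyadicKernel hc)
    hA hα0 hα1 (fun n : ℕ ↦ by positivity)
    (fun n ↦ zpow_le_one_of_nonpos₀ one_le_two (by lia))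
    (summable_two_zpow_neg_rpow (by linarith))).mono (by linarith)

theorem exists_forall_norm_iteratedFDeriv_farPotential_le (hφn : ContDiff ℝ ∞ φ)
    (hφ : φ =ᶠ[𝓝 0] 1) (hc : HasCompactSupport φ) (hp : p < 0) (hk : p + finrank ℝ E < k) :
    ∃ C, 0 ≤ C ∧ ∀ (w : E → ℝ) (M : ℝ), Integrable w μ → (∀ᵐ y ∂μ, ‖w y‖ ≤ M) → ∀ x,
      ‖iteratedFDeriv ℝ k (farPotential μ φ p w) x‖ ≤ C * M := by
  refine ⟨(∫ z, ‖iteratedFDeriv ℝ k (dyadicKernel φ p) z‖ ∂μ) *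
    ∑' n : ℕ, ((2 : ℝ) ^ (n : ℤ)) ^ (p + finrank ℝ E - k), by positivity, fun w M hw hM x ↦ ?_⟩
  refine (norm_iteratedFDeriv_tsum_convolution_dilate_le hw hM (contDiff_dyadicKernel hφn hφ)
    (hasCompactSupport_dyadicKernel hc) le_rfl (fun n ↦ one_le_zpow₀ one_le_two (by lia))
    (summable_two_zpow_natCast_rpow hp) (summable_two_zpow_natCast_rpow (by linarith)) x).trans_eq
    (by ring)

theorem exists_forall_holderNormLE_convolution_norm_rpow (hp : p < 0) (hα0 : 0 ≤ α) (hα1 : α ≤ 1)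
    (hkα : k + α < p + finrank ℝ E) :
    ∃ C, 0 ≤ C ∧ ∀ (w : E → ℝ) (M : ℝ), Integrable w μ → (∀ᵐ y ∂μ, ‖w y‖ ≤ M) →
      (∀ x, ‖(w ⋆[lsmul ℝ ℝ, μ] fun z ↦ ‖z‖ ^ p) x‖ ≤ M) →
      HolderNormLE k α (C * M) (w ⋆[lsmul ℝ ℝ, μ] fun z ↦ ‖z‖ ^ p) := by
  let φ : ContDiffBump (0 : E) := default
  obtain ⟨N, hN⟩ := exists_nat_gt (p + finrank ℝ E)
  have hkN : k < N := by exact_mod_cast (by linarith : (k : ℝ) < N)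
  have hφ : φ =ᶠ[𝓝 (0 : E)] 1 := φ.eventuallyEq_one
  have hψ : ContDiff ℝ ∞ (dyadicKernel φ p) := contDiff_dyadicKernel φ.contDiff hφ
  have hcψ : HasCompactSupport (dyadicKernel φ p) :=
    hasCompactSupport_dyadicKernel φ.hasCompactSupport
  obtain ⟨Cnear, hCnear, hnear⟩ := exists_forall_holderNormLE_nearPotential (μ := μ)
    φ.contDiff hφ φ.hasCompactSupport hα0 hα1 hkα
  obtain ⟨Cfar, hCfar, hfar⟩ := exists_forall_norm_iteratedFDeriv_farPotential_le (μ := μ)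
    φ.contDiff hφ φ.hasCompactSupport hp hN
  obtain ⟨C, hC, hinterp⟩ :=
    exists_forall_holderNormLE_add_of_bounded E ℝ hkN hα0 hα1
  refine ⟨C * (1 + Cnear + Cfar), by positivity, fun w M hw hM hv ↦ ?_⟩
  have hM0 : 0 ≤ M := (norm_nonneg _).trans (hv 0)
  have hsplit := convolution_norm_rpow_eq_near_add_far φ.contDiff hφ φ.hasCompactSupport hp
    (by linarith [k.cast_nonneg (α := ℝ)]) hw hM
  have hs1 (n : ℕ) : (1 : ℝ) ≤ 2 ^ (n : ℤ) := one_le_zpow₀ one_le_two (by lia)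
  have hsum := summable_two_zpow_natCast_rpow hp
  rw [hsplit, mul_assoc]
  refine hinterp _ _ _ ((hnear w M hw.locallyIntegrable hM).mono (by nlinarith))
    (contDiff_tsum_convolution_dilate hw hψ hcψ hs1 hsum)
    (fun i ↦ bddAbove_norm_iteratedFDeriv_tsum_convolution_dilate hw hψ hcψ hs1 hsum)
    (fun x ↦ (hfar w M hw hM x).trans (by nlinarith)) fun x ↦ ?_
  rw [← Pi.add_apply, ← hsplit]
  exact (hv x).trans (by nlinarith)

end Potential

end RieszPotential

theorem stmt8_general {E : Type*} [NormedAddCommGroup E] [InnerProductSpace ℝ E]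
    [FiniteDimensional ℝ E] [MeasurableSpace E] [BorelSpace E] (μ : Measure E)
    [μ.IsAddHaarMeasure] (c s α : ℝ) (k : ℕ) (hα0 : 0 ≤ α) (hα1 : α ≤ 1) (hk : k + α < 2 * s)
    (hs : 2 * s < Module.finrank ℝ E) :
    ∃ C : ℝ, 0 < C ∧ ∀ (w v : E → ℝ) (Mw Mv : ℝ), (∀ᵐ x ∂μ, |w x| ≤ Mw) → Integrable w μ →
      (∀ x, v x = c * ∫ y, w y * ‖x - y‖ ^ (2 * s - Module.finrank ℝ E) ∂μ) →
      (∀ x, |v x| ≤ Mv) → RieszPotential.HolderNormLE k α (C * (Mv + Mw)) v := by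
  obtain ⟨C, hC, hholder⟩ := RieszPotential.exists_forall_holderNormLE_convolution_norm_rpow
    (μ := μ) (sub_neg.2 hs) hα0 hα1 (by rwa [sub_add_cancel])
  refine ⟨C * (1 + |c|) + 1, by positivity, fun w v Mw Mv hw hwi hv hvb ↦ ?_⟩
  have hMw : 0 ≤ Mw := (abs_nonneg _).trans hw.exists.choose_spec
  have hMv : 0 ≤ Mv := (abs_nonneg _).trans (hvb 0)
  -- The constant is absorbed into the density, whose bound enters the estimate linearly.
  have hconv : v = convolution (c • w) (fun z ↦ ‖z‖ ^ (2 * s - Module.finrank ℝ E))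
      (.lsmul ℝ ℝ) μ := by
    ext1 x
    simp only [hv, convolution, ContinuousLinearMap.lsmul_apply, Pi.smul_apply, smul_eq_mul,
      mul_assoc, integral_const_mul]
  have hle : ∀ᵐ y ∂μ, ‖(c • w) y‖ ≤ Mv + |c| * Mw := by
    filter_upwards [hw] with y hy
    rw [Pi.smul_apply, norm_smul, Real.norm_eq_abs, Real.norm_eq_abs]
    nlinarith [mul_le_mul_of_nonneg_left hy (abs_nonneg c)]
  have hbound := hholder (c • w) (Mv + |c| * Mw) (hwi.smul c) hle fun x ↦ by
    rw [← hconv, Real.norm_eq_abs]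
    exact (hvb x).trans (le_add_of_nonneg_right (by positivity))
  rw [← hconv] at hbound
  have hsum : Mv + |c| * Mw ≤ (1 + |c|) * (Mv + Mw) := by
    nlinarith [mul_nonneg (abs_nonneg c) hMv]
  exact hbound.mono (by nlinarith)

/-- Schauder-type estimate for Riesz potentials (Theorem 5.2(ii)): if
`v = c_{n,s} ∫ w(y)|x-y|^{2s-n} dy` with `w ∈ L^∞ ∩ L¹`, `v ∈ L^∞`, `s = m + γ`,
`0 < 2γ ≤ 1`, then for every `α ∈ (0,2γ)` there is `C = C(n,s,α)` such that `v` is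
`C^{2m}` with all derivatives up to order `2m` bounded by `C(‖v‖_∞ + ‖w‖_∞)` and the
order-`2m` derivative globally `α`-Hölder with the same constant. -/
theorem stmt8 (n : ℕ) (hn : 1 ≤ n) (s γ α : ℝ) (m : ℕ)
    (hs : 0 < s) (hsn : 2 * s < (n : ℝ)) (hsm : s = (m : ℝ) + γ)
    (hγ0 : 0 ≤ γ) (hγ1 : γ < 1) (hγpos : 0 < 2 * γ) (hγhalf : 2 * γ ≤ 1)
    (hα : 0 < α) (hαγ : α < 2 * γ) :
    ∃ C : ℝ, 0 < C ∧
      ∀ (w v : EuclideanSpace ℝ (Fin n) → ℝ) (Mw Mv : ℝ),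
        (∀ x, |w x| ≤ Mw) → Integrable w →
        (∀ x, v x =
          (Real.Gamma ((n : ℝ) / 2 - s) /
              (Real.pi ^ ((n : ℝ) / 2) * 2 ^ (2 * s) * Real.Gamma s)) *
            ∫ y, w y * ‖x - y‖ ^ (2 * s - (n : ℝ))) →
        (∀ x, |v x| ≤ Mv) →
        ContDiff ℝ (2 * m) v ∧
        (∀ i ≤ 2 * m, ∀ x, ‖iteratedFDeriv ℝ i v x‖ ≤ C * (Mv + Mw)) ∧
        (∀ x y : EuclideanSpace ℝ (Fin n),
          ‖iteratedFDeriv ℝ (2 * m) v x - iteratedFDeriv ℝ (2 * m) v y‖ ≤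
            C * (Mv + Mw) * ‖x - y‖ ^ α) := by
  obtain ⟨C, hC, hholder⟩ := stmt8_general (E := EuclideanSpace ℝ (Fin n)) volume
    (Real.Gamma ((n : ℝ) / 2 - s) / (Real.pi ^ ((n : ℝ) / 2) * 2 ^ (2 * s) * Real.Gamma s))
    s α (2 * m) hα.le (by linarith) (by push_cast; linarith) (by simpa using hsn)
  refine ⟨C, hC, fun w v Mw Mv hw hwi hv hvb ↦ ?_⟩
  have h := hholder w v Mw Mv (.of_forall hw) hwi (by simpa using hv) hvb
  exact ⟨mod_cast h.contDiff, h.norm_iteratedFDeriv_le, h.norm_iteratedFDeriv_sub_le⟩
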